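/- arXiv:2210.03009 — 3 statements merged into one kernel-verified Lean document; each statement's English description precedes it below -/
import Mathlib

section
/- For every Λ > 0 there exists a C^∞ function g : ℝ → ℝ such that g(u) = G_Λ(u) for all u > 0, and likewise a C^∞ function g̃ : ℝ → ℝ such that g̃(u) = G_Λ(u) for all u < 0. That is, each one-sided restriction of the cutoff propagator G_Λ extends smoothly across u = 0. -/
open MeasureTheory Topology Filter

/-- The one-dimensional heat kernel `h_t(u) = (4πt)^(−1/2) · exp(−u²/(4t))`. -/
noncomputable def heat (t u : ℝ) : ℝ :=
  (Real.sqrt (4 * Real.pi * t))⁻¹ * Real.exp (-(u ^ 2) / (4 * t))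

/-- The `u`-derivative of the heat kernel, `h_t′(u) = −(u/(2t)) · h_t(u)`. -/
noncomputable def heat' (t u : ℝ) : ℝ := -(u / (2 * t)) * heat t u

/-- `(φh_t)′(u) = φ′(u)·h_t(u) + φ(u)·h_t′(u)`. -/
noncomputable def phiHeat' (φ : ℝ → ℝ) (t u : ℝ) : ℝ :=
  deriv φ u * heat t u + φ u * heat' t u

/-- `G_Λ(u) = ∫₀^Λ (φh_t)′(u) dt`. -/
noncomputable def Gcut (φ : ℝ → ℝ) (Λ u : ℝ) : ℝ := ∫ t in Set.Ioo 0 Λ, phiHeat' φ t u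

/-!
Heat-kernel integrals in the time variable are elementary. With
`B_t(u) = erf(u / (2√t)) / 2 = ∫₀^u h_t` and `A_t(u) = 2t h_t(u) + u B_t(u)`, the heat equation
gives `∂_t B = h_t′` and `∂_t A = h_t`, while as `t → 0⁺` one has `B_t(u) → sign u / 2` and
`A_t(u) → |u| / 2`. Hence
`G_Λ(u) = φ′(u) (A_Λ(u) - |u| / 2) + φ(u) (B_Λ(u) - sign u / 2)`,
in which only `|u|` and `sign u` fail to be smooth, and both are polynomial on either side of `0`.
-/

section ImproperIntegral

open Set

variable {f f' : ℝ → ℝ} {a b fa fb : ℝ}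

theorem integrableOn_Ioo_deriv_of_nonneg_of_tendsto
    (hderiv : ∀ x ∈ Ioo a b, HasDerivAt f (f' x) x) (hnonneg : ∀ x ∈ Ioo a b, 0 ≤ f' x)
    (ha : Tendsto f (𝓝[>] a) (𝓝 fa)) (hb : Tendsto f (𝓝[<] b) (𝓝 fb)) :
    IntegrableOn f' (Ioo a b) := by
  have hcont : ContinuousOn f (Ioo a b) := fun x hx ↦
    (hderiv x hx).continuousAt.continuousWithinAt
  have hderiv_extend : ∀ x ∈ Ioo a b, HasDerivAt (extendFrom (Ioo a b) f) (f' x) x := by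
    refine fun x hx ↦ (hderiv x hx).congr_of_eventuallyEq ?_
    filter_upwards [Ioo_mem_nhds hx.1 hx.2] with y hy
    exact extendFrom_eq (subset_closure hy) (hcont y hy)
  exact (intervalIntegral.integrableOn_deriv_of_nonneg
    (continuousOn_Icc_extendFrom_Ioo hcont ha hb) hderiv_extend hnonneg).mono_set
    Ioo_subset_Ioc_self

theorem setIntegral_Ioo_eq_sub_of_hasDerivAt_of_tendsto (hab : a < b)
    (hderiv : ∀ x ∈ Ioo a b, HasDerivAt f (f' x) x) (hint : IntegrableOn f' (Ioo a b))
    (ha : Tendsto f (𝓝[>] a) (𝓝 fa)) (hb : Tendsto f (𝓝[<] b) (𝓝 fb)) :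
    ∫ x in Ioo a b, f' x = fb - fa := by
  rw [← integral_Ioc_eq_integral_Ioo, ← intervalIntegral.integral_of_le hab.le]
  exact intervalIntegral.integral_eq_sub_of_hasDerivAt_of_tendsto hab hderiv
    ((intervalIntegrable_iff_integrableOn_Ioo_of_le hab.le).2 hint) ha hb

end ImproperIntegral

section ErrorFunction

open Real

/-- The error function `erf x = (2 / √π) ∫₀^x exp(-s²) ds`. -/
noncomputable def erf (x : ℝ) : ℝ := 2 / √π * ∫ s in (0 : ℝ)..x, exp (-s ^ 2)

theorem hasDerivAt_erf (x : ℝ) : HasDerivAt erf (2 / √π * exp (-x ^ 2)) x := by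
  have hcont : Continuous fun s : ℝ ↦ exp (-s ^ 2) := by fun_prop
  exact (hcont.integral_hasStrictDerivAt 0 x).hasDerivAt.const_mul _

theorem contDiff_erf {n : ℕ∞} : ContDiff ℝ n erf := by
  have hderiv : deriv erf = fun x ↦ 2 / √π * exp (-x ^ 2) :=
    funext fun x ↦ (hasDerivAt_erf x).deriv
  have hsmooth : ContDiff ℝ (⊤ : ℕ∞) erf := by
    rw [contDiff_infty_iff_deriv, hderiv]
    exact ⟨fun x ↦ (hasDerivAt_erf x).differentiableAt, by fun_prop⟩
  exact hsmooth.of_le (mod_cast le_top)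

theorem erf_zero : erf 0 = 0 := by simp [erf]

theorem erf_neg (x : ℝ) : erf (-x) = -erf x := by
  have hreflect := intervalIntegral.integral_comp_neg (a := 0) (b := x) fun s : ℝ ↦ exp (-s ^ 2)
  simp only [neg_sq, neg_zero] at hreflect
  rw [erf, erf, hreflect, intervalIntegral.integral_symm, mul_neg]

theorem tendsto_erf_atTop : Tendsto erf atTop (𝓝 1) := by
  have hint : IntegrableOn (fun s : ℝ ↦ exp (-s ^ 2)) (Set.Ioi 0) := by
    simpa using (integrable_exp_neg_mul_sq one_pos).integrableOn
  have hgauss : ∫ s in Set.Ioi (0 : ℝ), exp (-s ^ 2) = √π / 2 := by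
    simpa using integral_gaussian_Ioi 1
  have hlim := (intervalIntegral_tendsto_integral_Ioi 0 hint tendsto_id).const_mul (2 / √π)
  rwa [hgauss, div_mul_div_cancel₀ (by positivity), div_self two_ne_zero] at hlim

theorem tendsto_erf_atBot : Tendsto erf atBot (𝓝 (-1)) := by
  simpa [Function.comp_def, erf_neg] using (tendsto_erf_atTop.comp tendsto_neg_atBot_atTop).neg

theorem tendsto_erf_const_mul_atTop (u : ℝ) :
    Tendsto (fun x ↦ erf (u * x)) atTop (𝓝 (SignType.sign u)) := by
  rcases lt_trichotomy u 0 with hneg | rfl | hpos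
  · simpa [hneg, Function.comp_def] using
      tendsto_erf_atBot.comp (tendsto_id.const_mul_atTop_of_neg hneg)
  · simp [erf_zero]
  · simpa [hpos, Function.comp_def] using
      tendsto_erf_atTop.comp (tendsto_id.const_mul_atTop hpos)

end ErrorFunction

section HeatKernel

open Real

variable {t : ℝ} (u : ℝ)

theorem heat_nonneg (t u : ℝ) : 0 ≤ heat t u := by
  unfold heat
  positivity

theorem heat_le (ht : 0 ≤ t) : heat t u ≤ (√(4 * π * t))⁻¹ :=
  mul_le_of_le_one_right (by positivity)
    (exp_le_one_iff.2 (div_nonpos_of_nonpos_of_nonneg (neg_nonpos.2 (sq_nonneg u)) (by positivity)))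

theorem contDiff_heat {n : ℕ∞} (t : ℝ) : ContDiff ℝ n (heat t) := by
  unfold heat
  fun_prop

theorem hasDerivAt_heat_time (ht : 0 < t) :
    HasDerivAt (fun s ↦ heat s u) ((u ^ 2 / (4 * t ^ 2) - 1 / (2 * t)) * heat t u) t := by
  have hradicand : 0 < 4 * π * t := by positivity
  have hprefactor :
      HasDerivAt (fun s ↦ (√(4 * π * s))⁻¹) (-(1 / (2 * t)) * (√(4 * π * t))⁻¹) t := by
    refine ((((hasDerivAt_id' t).const_mul (4 * π)).sqrt hradicand.ne').fun_inv
      (by positivity)).congr_deriv ?_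
    rw [sq_sqrt hradicand.le]
    field_simp
  have hexp : HasDerivAt (fun s ↦ exp (-(u ^ 2) / (4 * s)))
      (exp (-(u ^ 2) / (4 * t)) * (u ^ 2 / (4 * t ^ 2))) t := by
    refine ((hasDerivAt_const t (-(u ^ 2))).fun_div ((hasDerivAt_id' t).const_mul 4)
      (by positivity)).exp.congr_deriv ?_
    field_simp
    ring
  refine (hprefactor.fun_mul hexp).congr_deriv ?_
  unfold heat
  ring

theorem tendsto_mul_heat_nhdsGT_zero : Tendsto (fun t ↦ t * heat t u) (𝓝[>] 0) (𝓝 0) := by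
  have hbound : ∀ t : ℝ, 0 < t → t * heat t u ≤ √t / √(4 * π) := fun t ht ↦
    calc t * heat t u ≤ t * (√(4 * π * t))⁻¹ := by gcongr; exact heat_le u ht.le
      _ = √t / √(4 * π) := by
        rw [sqrt_mul (by positivity), mul_inv, mul_left_comm, ← div_eq_mul_inv t, div_sqrt]
        ring
  have hbound_lim : Tendsto (fun t ↦ √t / √(4 * π)) (𝓝[>] 0) (𝓝 0) := by
    have hcont : Continuous fun t ↦ √t / √(4 * π) := by fun_prop
    simpa using (hcont.tendsto 0).mono_left nhdsWithin_le_nhds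
  refine squeeze_zero' ?_ ?_ hbound_lim <;> filter_upwards [self_mem_nhdsWithin] with t ht
  · exact mul_nonneg (le_of_lt ht) (heat_nonneg t u)
  · exact hbound t ht

/-- The function `erf(u / (2√t)) / 2`, equal to `∫₀^u h_t` for `t > 0`, as a primitive of `h_t′(u)`
in the time variable `t`. -/
noncomputable def heatDerivTimePrimitive (t u : ℝ) : ℝ := erf (u / (2 * √t)) / 2

/-- A primitive of `h_t(u)` in the time variable `t`. -/
noncomputable def heatTimePrimitive (t u : ℝ) : ℝ :=
  2 * t * heat t u + u * heatDerivTimePrimitive t u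

theorem contDiff_heatDerivTimePrimitive {n : ℕ∞} (t : ℝ) :
    ContDiff ℝ n (heatDerivTimePrimitive t) :=
  (contDiff_erf.comp (contDiff_id.div_const _)).div_const _

theorem contDiff_heatTimePrimitive {n : ℕ∞} (t : ℝ) : ContDiff ℝ n (heatTimePrimitive t) :=
  (contDiff_const.mul (contDiff_heat t)).add (contDiff_id.mul (contDiff_heatDerivTimePrimitive t))

theorem hasDerivAt_heatDerivTimePrimitive (ht : 0 < t) :
    HasDerivAt (fun s ↦ heatDerivTimePrimitive s u) (heat' t u) t := by
  have harg : HasDerivAt (fun s ↦ u / (2 * √s)) (-(u / (2 * t)) / (2 * √t)) t := by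
    refine ((hasDerivAt_const t u).fun_div ((hasDerivAt_sqrt ht.ne').const_mul 2)
      (by positivity)).congr_deriv ?_
    rw [mul_pow, sq_sqrt ht.le]
    field_simp
    ring
  have hexponent : -(u / (2 * √t)) ^ 2 = -(u ^ 2) / (4 * t) := by
    rw [div_pow, mul_pow, sq_sqrt ht.le]
    ring
  have hsqrt : √(4 * π * t) = 2 * √π * √t := by
    rw [sqrt_mul (by positivity), sqrt_mul (by norm_num), show (4 : ℝ) = 2 ^ 2 by norm_num,
      sqrt_sq (by norm_num)]
  refine (((hasDerivAt_erf _).comp t harg).div_const 2).congr_deriv ?_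
  rw [hexponent, heat', heat, hsqrt]
  field_simp

theorem hasDerivAt_heatTimePrimitive (ht : 0 < t) :
    HasDerivAt (fun s ↦ heatTimePrimitive s u) (heat t u) t := by
  refine ((((hasDerivAt_id' t).const_mul 2).fun_mul (hasDerivAt_heat_time u ht)).add
    ((hasDerivAt_heatDerivTimePrimitive u ht).const_mul u)).congr_deriv ?_
  unfold heat'
  field_simp
  ring

theorem tendsto_heatDerivTimePrimitive_nhdsGT_zero :
    Tendsto (fun t ↦ heatDerivTimePrimitive t u) (𝓝[>] 0) (𝓝 (SignType.sign u / 2)) := by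
  have hsqrt : Tendsto (fun t ↦ 2 * √t) (𝓝[>] 0) (𝓝[>] 0) := by
    refine tendsto_nhdsWithin_iff.2 ⟨?_, ?_⟩
    · have hcont : Continuous fun t ↦ 2 * √t := by fun_prop
      simpa using (hcont.tendsto 0).mono_left nhdsWithin_le_nhds
    · filter_upwards [self_mem_nhdsWithin] with t ht
      exact mul_pos two_pos (sqrt_pos.2 ht)
  exact ((tendsto_erf_const_mul_atTop u).comp hsqrt.inv_tendsto_nhdsGT_zero).div_const 2

theorem tendsto_heatTimePrimitive_nhdsGT_zero :
    Tendsto (fun t ↦ heatTimePrimitive t u) (𝓝[>] 0) (𝓝 (|u| / 2)) := by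
  have hlim := ((tendsto_mul_heat_nhdsGT_zero u).const_mul 2).add
    ((tendsto_heatDerivTimePrimitive_nhdsGT_zero u).const_mul u)
  simpa only [heatTimePrimitive, mul_assoc, mul_zero, zero_add, ← mul_div_assoc, self_mul_sign]
    using hlim

end HeatKernel

section TimeIntegrals

open Set

variable {Λ : ℝ} (u : ℝ)

theorem integrableOn_heat (hΛ : 0 < Λ) : IntegrableOn (fun t ↦ heat t u) (Ioo 0 Λ) :=
  integrableOn_Ioo_deriv_of_nonneg_of_tendsto
    (fun _ ht ↦ hasDerivAt_heatTimePrimitive u ht.1) (fun t _ ↦ heat_nonneg t u)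
    (tendsto_heatTimePrimitive_nhdsGT_zero u)
    ((hasDerivAt_heatTimePrimitive u hΛ).continuousAt.mono_left nhdsWithin_le_nhds)

theorem integral_heat (hΛ : 0 < Λ) :
    ∫ t in Ioo 0 Λ, heat t u = heatTimePrimitive Λ u - |u| / 2 :=
  setIntegral_Ioo_eq_sub_of_hasDerivAt_of_tendsto hΛ
    (fun _ ht ↦ hasDerivAt_heatTimePrimitive u ht.1) (integrableOn_heat u hΛ)
    (tendsto_heatTimePrimitive_nhdsGT_zero u)
    ((hasDerivAt_heatTimePrimitive u hΛ).continuousAt.mono_left nhdsWithin_le_nhds)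

theorem integrableOn_heat' (hΛ : 0 < Λ) : IntegrableOn (fun t ↦ heat' t u) (Ioo 0 Λ) := by
  rcases eq_or_ne u 0 with rfl | hu
  · simp [heat']
  -- The sign of `h_t′(u)` depends on `u`, that of `-u h_t′(u)` does not.
  have hnonneg : ∀ t ∈ Ioo 0 Λ, 0 ≤ -u * heat' t u := fun t ht ↦
    calc 0 ≤ u ^ 2 / (2 * t) * heat t u :=
          mul_nonneg (div_nonneg (sq_nonneg u) (by linarith [ht.1])) (heat_nonneg t u)
      _ = -u * heat' t u := by
          unfold heat'
          ring
  have hint : IntegrableOn (fun t ↦ -u * heat' t u) (Ioo 0 Λ) :=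
    integrableOn_Ioo_deriv_of_nonneg_of_tendsto
      (fun _ ht ↦ (hasDerivAt_heatDerivTimePrimitive u ht.1).const_mul (-u)) hnonneg
      ((tendsto_heatDerivTimePrimitive_nhdsGT_zero u).const_mul (-u))
      (((hasDerivAt_heatDerivTimePrimitive u hΛ).const_mul (-u)).continuousAt.mono_left
        nhdsWithin_le_nhds)
  exact (integrable_const_mul_iff (neg_ne_zero.2 hu).isUnit _).1 hint

theorem integral_heat' (hΛ : 0 < Λ) :
    ∫ t in Ioo 0 Λ, heat' t u = heatDerivTimePrimitive Λ u - SignType.sign u / 2 :=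
  setIntegral_Ioo_eq_sub_of_hasDerivAt_of_tendsto hΛ
    (fun _ ht ↦ hasDerivAt_heatDerivTimePrimitive u ht.1) (integrableOn_heat' u hΛ)
    (tendsto_heatDerivTimePrimitive_nhdsGT_zero u)
    ((hasDerivAt_heatDerivTimePrimitive u hΛ).continuousAt.mono_left nhdsWithin_le_nhds)

theorem Gcut_eq (φ : ℝ → ℝ) (hΛ : 0 < Λ) :
    Gcut φ Λ u = deriv φ u * (heatTimePrimitive Λ u - |u| / 2) +
      φ u * (heatDerivTimePrimitive Λ u - SignType.sign u / 2) := by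
  unfold Gcut phiHeat'
  rw [integral_add ((integrableOn_heat u hΛ).const_mul _) ((integrableOn_heat' u hΛ).const_mul _),
    integral_const_mul, integral_const_mul, integral_heat u hΛ, integral_heat' u hΛ]

end TimeIntegrals

section SmoothExtension

variable {φ : ℝ → ℝ} {n : ℕ∞}

/-- The closed form of `G_Λ` with `sign u` replaced by a constant `ε`, and so `|u| = u sign u`
by `ε u`; it continues `G_Λ` across `0` from the right for `ε = 1` and from the left for
`ε = -1`. -/
noncomputable def GcutExtension (φ : ℝ → ℝ) (Λ ε u : ℝ) : ℝ :=
  deriv φ u * (heatTimePrimitive Λ u - ε * u / 2) + φ u * (heatDerivTimePrimitive Λ u - ε / 2)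

theorem contDiff_GcutExtension (hφ : ContDiff ℝ (n + 1) φ) (Λ ε : ℝ) :
    ContDiff ℝ n (GcutExtension φ Λ ε) := by
  have hφ₀ : ContDiff ℝ n φ := hφ.of_le le_self_add
  have hA : ContDiff ℝ n (heatTimePrimitive Λ) := contDiff_heatTimePrimitive Λ
  have hB : ContDiff ℝ n (heatDerivTimePrimitive Λ) := contDiff_heatDerivTimePrimitive Λ
  unfold GcutExtension
  fun_prop

theorem GcutExtension_sign {Λ : ℝ} (φ : ℝ → ℝ) (hΛ : 0 < Λ) (u : ℝ) :
    GcutExtension φ Λ (SignType.sign u) u = Gcut φ Λ u := by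
  rw [Gcut_eq u φ hΛ, GcutExtension, sign_mul_self]

theorem stmt2_general (hφ : ContDiff ℝ (n + 1) φ) {Λ : ℝ} (hΛ : 0 < Λ) :
    (∃ g : ℝ → ℝ, ContDiff ℝ n g ∧ ∀ u : ℝ, 0 < u → g u = Gcut φ Λ u) ∧
    (∃ gt : ℝ → ℝ, ContDiff ℝ n gt ∧ ∀ u : ℝ, u < 0 → gt u = Gcut φ Λ u) := by
  refine ⟨⟨GcutExtension φ Λ 1, contDiff_GcutExtension hφ Λ 1, fun u hu ↦ ?_⟩,
    ⟨GcutExtension φ Λ (-1), contDiff_GcutExtension hφ Λ (-1), fun u hu ↦ ?_⟩⟩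
  · simpa [hu] using GcutExtension_sign φ hΛ u
  · simpa [hu] using GcutExtension_sign φ hΛ u

end SmoothExtension

/-- Each one-sided restriction of the cutoff propagator `G_Λ` extends smoothly across
`u = 0`: there are `C^∞` functions `g, g̃ : ℝ → ℝ` with `g = G_Λ` on `(0, ∞)` and
`g̃ = G_Λ` on `(−∞, 0)`. -/
theorem stmt2 (φ : ℝ → ℝ) (hφ : ContDiff ℝ (⊤ : ℕ∞) φ) (hsupp : HasCompactSupport φ)
    (heven : ∀ x, φ (-x) = φ x) (δ : ℝ) (hδ : 0 < δ) (hone : ∀ x, |x| < δ → φ x = 1)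
    (Λ : ℝ) (hΛ : 0 < Λ) :
    (∃ g : ℝ → ℝ, ContDiff ℝ (⊤ : ℕ∞) g ∧ ∀ u : ℝ, 0 < u → g u = Gcut φ Λ u) ∧
    (∃ gt : ℝ → ℝ, ContDiff ℝ (⊤ : ℕ∞) gt ∧ ∀ u : ℝ, u < 0 → gt u = Gcut φ Λ u) := by
  exact stmt2_general (n := ⊤) hφ hΛ
end

section
/- For every Λ > 0, the one-sided limits of the cutoff propagator at the diagonal exist and are independent of Λ and of the cutoff: lim_{u→0⁺} G_Λ(u) = −1/2 and lim_{u→0⁻} G_Λ(u) = +1/2. In particular the jump lim_{u→0⁻} G_Λ(u) − lim_{u→0⁺} G_Λ(u) equals 1. -/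
open MeasureTheory Topology Filter

/-!
Near the diagonal `φ = 1`, so `G_Λ(u) = ∫₀^Λ h_t′(u) dt`. The parabolic scaling
`h_{c²t}′(cu) = c⁻² h_t′(u)` turns this, for `u > 0`, into `∫₀^{Λ/u²} h_t′(1) dt`, which tends to
`∫₀^∞ h_t′(1) dt` as `u → 0⁺` whatever `Λ` is. The same scaling and the substitution `t = x⁻²`
identify that integral with `-∫₀^∞ h_1(x) dx`, minus half the total mass of the heat kernel.
The limit from the left follows because `h_t′` is odd.
-/

theorem heat_sq_mul_mul {c : ℝ} (hc : c ≠ 0) (t u : ℝ) :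
    heat (c ^ 2 * t) (c * u) = |c|⁻¹ * heat t u := by
  have sqrt_scale : √(4 * Real.pi * (c ^ 2 * t)) = |c| * √(4 * Real.pi * t) := by
    rw [mul_left_comm, Real.sqrt_mul (sq_nonneg c), Real.sqrt_sq_eq_abs]
  have exponent_scale : -(c * u) ^ 2 / (4 * (c ^ 2 * t)) = -u ^ 2 / (4 * t) := by
    rw [mul_pow, ← mul_neg, mul_left_comm 4, mul_div_mul_left _ _ (pow_ne_zero 2 hc)]
  rw [heat, heat, sqrt_scale, exponent_scale, mul_inv, mul_assoc]

theorem heat'_sq_mul_mul {c : ℝ} (hc : 0 < c) (t u : ℝ) :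
    heat' (c ^ 2 * t) (c * u) = (c ^ 2)⁻¹ * heat' t u := by
  rw [heat', heat', heat_sq_mul_mul hc.ne', abs_of_pos hc]
  field_simp

theorem heat'_neg (t u : ℝ) : heat' t (-u) = -heat' t u := by
  simp only [heat', heat, neg_sq, neg_div, neg_mul]

theorem integral_heat_Ioi {t : ℝ} (ht : 0 < t) : ∫ x in Set.Ioi 0, heat t x = 1 / 2 := by
  have gaussian (x : ℝ) : heat t x = (√(4 * Real.pi * t))⁻¹ * Real.exp (-(4 * t)⁻¹ * x ^ 2) := by
    rw [heat, neg_mul, ← div_eq_inv_mul (x ^ 2), neg_div]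
  have sqrt_ne_zero : √(4 * Real.pi * t) ≠ 0 := by positivity
  simp only [gaussian]
  rw [integral_const_mul, integral_gaussian_Ioi, div_inv_eq_mul,
    show Real.pi * (4 * t) = 4 * Real.pi * t by ring]
  field_simp

theorem integral_heat'_Ioi {u : ℝ} (hu : 0 < u) : ∫ t in Set.Ioi 0, heat' t u = -(1 / 2) := by
  have substitution (x : ℝ) (hx : x ∈ Set.Ioi 0) :
      (|(-2 : ℝ)| * x ^ ((-2 : ℝ) - 1)) • heat' (x ^ (-2 : ℝ)) u = -(u * heat 1 (u * x)) := by
    have hx : 0 < x := hx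
    have rpow_neg_three : x ^ ((-2 : ℝ) - 1) = (x ^ 3)⁻¹ := by
      rw [show (-2 : ℝ) - 1 = -(3 : ℕ) by norm_num, Real.rpow_neg hx.le, Real.rpow_natCast]
    have rpow_neg_two : x ^ (-2 : ℝ) = x⁻¹ ^ 2 * 1 := by
      rw [Real.rpow_neg hx.le, Real.rpow_two, inv_pow, mul_one]
    have rescaled : heat' (x ^ (-2 : ℝ)) u = x ^ 2 * heat' 1 (u * x) := by
      have scaling := heat'_sq_mul_mul (inv_pos.2 hx) 1 (u * x)
      rwa [← rpow_neg_two, show x⁻¹ * (u * x) = u by field_simp, inv_pow, inv_inv] at scaling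
    rw [rescaled, rpow_neg_three, heat', abs_neg, abs_two, smul_eq_mul]
    field_simp
  calc ∫ t in Set.Ioi 0, heat' t u
      = ∫ x in Set.Ioi 0, -(u * heat 1 (u * x)) := by
        rw [← integral_comp_rpow_Ioi (fun t ↦ heat' t u) (p := -2) (by norm_num)]
        exact setIntegral_congr_fun measurableSet_Ioi substitution
    _ = -∫ x in Set.Ioi 0, heat 1 x := by
        rw [integral_neg, integral_const_mul, integral_comp_mul_left_Ioi (heat 1) 0 hu, mul_zero,
          smul_eq_mul, mul_inv_cancel_left₀ hu.ne']
    _ = -(1 / 2) := by rw [integral_heat_Ioi one_pos]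

theorem integrableOn_heat'_Ioi {u : ℝ} (hu : 0 < u) :
    IntegrableOn (fun t ↦ heat' t u) (Set.Ioi 0) :=
  Integrable.of_integral_ne_zero <| by rw [integral_heat'_Ioi hu]; norm_num

theorem intervalIntegral_heat'_mul {c : ℝ} (hc : 0 < c) (Λ u : ℝ) :
    ∫ t in 0..Λ, heat' t (c * u) = ∫ t in 0..Λ / c ^ 2, heat' t u := by
  have hc2 : c ^ 2 ≠ 0 := by positivity
  calc ∫ t in 0..Λ, heat' t (c * u)
      = c ^ 2 * ∫ t in 0..Λ / c ^ 2, heat' (c ^ 2 * t) (c * u) := by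
        rw [intervalIntegral.mul_integral_comp_mul_left (f := fun t ↦ heat' t (c * u)), mul_zero,
          mul_div_cancel₀ Λ hc2]
    _ = ∫ t in 0..Λ / c ^ 2, heat' t u := by
        simp only [heat'_sq_mul_mul hc]
        rw [intervalIntegral.integral_const_mul, mul_inv_cancel_left₀ hc2]

theorem tendsto_intervalIntegral_heat'_nhdsGT {Λ : ℝ} (hΛ : 0 < Λ) :
    Tendsto (fun u ↦ ∫ t in 0..Λ, heat' t u) (𝓝[>] 0) (𝓝 (-(1 / 2))) := by
  have upper_limit : Tendsto (fun u : ℝ ↦ Λ / u ^ 2) (𝓝[>] 0) atTop := by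
    have := ((tendsto_pow_atTop two_ne_zero).comp tendsto_inv_nhdsGT_zero).const_mul_atTop hΛ
    simpa only [Function.comp_def, inv_pow, ← div_eq_mul_inv] using this
  have rescaled := intervalIntegral_tendsto_integral_Ioi 0 (integrableOn_heat'_Ioi one_pos)
    upper_limit
  rw [integral_heat'_Ioi one_pos] at rescaled
  refine rescaled.congr' ?_
  filter_upwards [self_mem_nhdsWithin] with u hu
  rw [← intervalIntegral_heat'_mul hu, mul_one]

theorem tendsto_intervalIntegral_heat'_nhdsLT {Λ : ℝ} (hΛ : 0 < Λ) :
    Tendsto (fun u ↦ ∫ t in 0..Λ, heat' t u) (𝓝[<] 0) (𝓝 (1 / 2)) := by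
  have neg_nhdsLT : Tendsto Neg.neg (𝓝[<] (0 : ℝ)) (𝓝[>] 0) := by
    simpa only [neg_zero] using tendsto_neg_nhdsLT (a := (0 : ℝ))
  have reflected := ((tendsto_intervalIntegral_heat'_nhdsGT hΛ).comp neg_nhdsLT).neg
  simpa only [Function.comp_def, heat'_neg, intervalIntegral.integral_neg, neg_neg] using reflected

theorem Gcut_eventuallyEq_intervalIntegral_heat' {φ : ℝ → ℝ} {a : ℝ} (hφ : φ =ᶠ[𝓝 a] 1)
    {Λ : ℝ} (hΛ : 0 ≤ Λ) : Gcut φ Λ =ᶠ[𝓝 a] fun u ↦ ∫ t in 0..Λ, heat' t u := by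
  filter_upwards [hφ, hφ.deriv] with u value_eq deriv_eq
  have deriv_eq_zero : deriv φ u = 0 := by rw [deriv_eq, deriv_one]; rfl
  simp only [Gcut, phiHeat', value_eq, deriv_eq_zero, Pi.one_apply, zero_mul, one_mul, zero_add]
  rw [intervalIntegral.integral_of_le hΛ, integral_Ioc_eq_integral_Ioo]

theorem stmt3_general {φ : ℝ → ℝ} (hφ : φ =ᶠ[𝓝 0] 1) {Λ : ℝ} (hΛ : 0 < Λ) :
    Tendsto (Gcut φ Λ) (𝓝[>] 0) (𝓝 (-(1 / 2))) ∧ Tendsto (Gcut φ Λ) (𝓝[<] 0) (𝓝 (1 / 2)) := by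
  have near_diagonal := Gcut_eventuallyEq_intervalIntegral_heat' hφ hΛ.le
  exact ⟨(tendsto_intervalIntegral_heat'_nhdsGT hΛ).congr'
      (near_diagonal.filter_mono nhdsWithin_le_nhds).symm,
    (tendsto_intervalIntegral_heat'_nhdsLT hΛ).congr'
      (near_diagonal.filter_mono nhdsWithin_le_nhds).symm⟩

/-- The one-sided limits of the cutoff propagator at the diagonal:
`lim_{u→0⁺} G_Λ(u) = −1/2`, `lim_{u→0⁻} G_Λ(u) = 1/2`, and the jump equals `1`. -/
theorem stmt3 (φ : ℝ → ℝ) (hφ : ContDiff ℝ (⊤ : ℕ∞) φ) (hsupp : HasCompactSupport φ)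
    (heven : ∀ x, φ (-x) = φ x) (δ : ℝ) (hδ : 0 < δ) (hone : ∀ x, |x| < δ → φ x = 1)
    (Λ : ℝ) (hΛ : 0 < Λ) :
    Tendsto (Gcut φ Λ) (𝓝[>] (0 : ℝ)) (𝓝 (-(1 / 2))) ∧
    Tendsto (Gcut φ Λ) (𝓝[<] (0 : ℝ)) (𝓝 (1 / 2)) ∧
    (1 / 2 : ℝ) - (-(1 / 2)) = 1 := by
  have eventually_one : φ =ᶠ[𝓝 0] 1 := (eventually_abs_sub_lt 0 hδ).mono (by simpa using hone)
  exact and_assoc.1 ⟨stmt3_general eventually_one hΛ, by norm_num⟩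
end

section
/- For every Λ > 0 and every x₀ ≥ 0, both one-sided limits A₁ = lim_{(x,y)→(x₀,x₀), 0 ≤ x < y} ρ̄_Λ(x, y) and A₂ = lim_{(x,y)→(x₀,x₀), 0 ≤ y < x} ρ̄_Λ(x, y) exist, and their difference is the constant A₁ − A₂ = −1/2, independent of x₀, of Λ, and of the cutoff φ. -/
open MeasureTheory Topology Filter

/-- The scalar propagator kernel
`ρ_{ε,Λ}(x, y) = −(1/2) ∫_ε^Λ [(φh_t)′(x − y) + (φh_t)′(x + y)] dt`. -/
noncomputable def rho (φ : ℝ → ℝ) (ε Λ x y : ℝ) : ℝ :=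
  -(1 / 2) * ∫ t in ε..Λ, (phiHeat' φ t (x - y) + phiHeat' φ t (x + y))

/-- `ρ̄_Λ(x, y) = lim_{ε→0⁺} ρ_{ε,Λ}(x, y)` (whenever the limit exists). -/
noncomputable def rhoBar (φ : ℝ → ℝ) (Λ x y : ℝ) : ℝ :=
  limUnder (𝓝[>] (0 : ℝ)) (fun ε => rho φ ε Λ x y)

/-!
Since `h_t′(u) = ∂_t E(u / (2√t))` for the Gaussian primitive `E(s) = π^(-1/2) ∫₀ˢ exp(-r²) dr`,
the time integral of `h_t′(u)` over `[ε, Λ]` is `E(u / (2√Λ)) - E(u / (2√ε))`. As `ε → 0⁺`,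
`E(u / (2√ε))` tends to `sign u / 2`, because `E(±∞) = ±1/2`, whereas the time integral of `h_t(u)`
converges to a continuous function of `u`. Hence `ρ̄_Λ(x, y)` is continuous wherever the signs of
`x - y` and `x + y` are held fixed, and the diagonal limits from `x < y` and from `y < x` differ by
`-φ(0) / 2`.
-/

/-- Half the error function, `π^(-1/2) ∫₀ˢ exp(-r²) dr`: evaluated at `u / (2√t)` it is a primitive
in `t` of `heat' t u`. The normalization gives it the limits `±1/2` at `±∞`. -/
noncomputable def halfErf (s : ℝ) : ℝ :=
  (√Real.pi)⁻¹ * ∫ r in (0 : ℝ)..s, Real.exp (-r ^ 2)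

lemma hasDerivAt_halfErf (s : ℝ) :
    HasDerivAt halfErf ((√Real.pi)⁻¹ * Real.exp (-s ^ 2)) s := by
  have hcont : Continuous fun r : ℝ => Real.exp (-r ^ 2) := by fun_prop
  exact (hcont.integral_hasStrictDerivAt 0 s).hasDerivAt.const_mul _

lemma continuous_halfErf : Continuous halfErf :=
  continuous_iff_continuousAt.2 fun s => (hasDerivAt_halfErf s).continuousAt

@[simp]
lemma halfErf_zero : halfErf 0 = 0 := by simp [halfErf]

@[simp]
lemma halfErf_neg (s : ℝ) : halfErf (-s) = -halfErf s := by
  have hreflect := intervalIntegral.integral_comp_neg (a := 0) (b := s)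
    fun r : ℝ => Real.exp (-r ^ 2)
  simp only [neg_sq, neg_zero] at hreflect
  rw [halfErf, halfErf, hreflect, intervalIntegral.integral_symm, mul_neg]

lemma tendsto_halfErf_atTop : Tendsto halfErf atTop (𝓝 (1 / 2)) := by
  have hint : Integrable fun r : ℝ => Real.exp (-r ^ 2) := by
    simpa using integrable_exp_neg_mul_sq one_pos
  have hval : ∫ r in Set.Ioi (0 : ℝ), Real.exp (-r ^ 2) = √Real.pi / 2 := by
    simpa using integral_gaussian_Ioi 1
  have hlim := (intervalIntegral_tendsto_integral_Ioi 0 hint.integrableOn tendsto_id).const_mul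
    (√Real.pi)⁻¹
  have hpi : √Real.pi ≠ 0 := (Real.sqrt_pos.2 Real.pi_pos).ne'
  rwa [hval, ← mul_div_assoc, inv_mul_cancel₀ hpi] at hlim

lemma hasDerivAt_halfErf_div_sqrt (u : ℝ) {t : ℝ} (ht : 0 < t) :
    HasDerivAt (fun t => halfErf (u / (2 * √t))) (heat' t u) t := by
  have hinner : HasDerivAt (fun t => u / (2 * √t))
      ((0 * (2 * √t) - u * (2 * (1 / (2 * √t)))) / (2 * √t) ^ 2) t :=
    (hasDerivAt_const t u).div ((Real.hasDerivAt_sqrt ht.ne').const_mul 2) (by positivity)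
  refine ((hasDerivAt_halfErf _).comp t hinner).congr_deriv ?_
  have hnorm : √(4 * Real.pi * t) = 2 * √Real.pi * √t := by
    rw [Real.sqrt_mul (by positivity), Real.sqrt_mul (by norm_num),
      show (4 : ℝ) = 2 ^ 2 by norm_num, Real.sqrt_sq (by norm_num)]
  have hexponent : -(u / (2 * √t)) ^ 2 = -(u ^ 2) / (4 * t) := by
    rw [div_pow, mul_pow, Real.sq_sqrt ht.le]
    ring
  rw [heat', heat, hnorm, hexponent, mul_pow, Real.sq_sqrt ht.le]
  field_simp
  ring

lemma tendsto_halfErf_div_sqrt_of_pos {u : ℝ} (hu : 0 < u) :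
    Tendsto (fun t => halfErf (u / (2 * √t))) (𝓝[>] 0) (𝓝 (1 / 2)) := by
  have hdenom : Tendsto (fun t : ℝ => 2 * √t) (𝓝[>] 0) (𝓝[>] 0) := by
    refine tendsto_nhdsWithin_iff.2 ⟨?_, ?_⟩
    · have hcont : Continuous fun t : ℝ => 2 * √t := by fun_prop
      simpa using (hcont.tendsto 0).mono_left nhdsWithin_le_nhds
    · filter_upwards [self_mem_nhdsWithin] with t ht
      exact mul_pos two_pos (Real.sqrt_pos.2 ht)
  exact tendsto_halfErf_atTop.comp ((tendsto_inv_nhdsGT_zero.comp hdenom).const_mul_atTop hu)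

lemma tendsto_halfErf_div_sqrt (u : ℝ) :
    Tendsto (fun t => halfErf (u / (2 * √t))) (𝓝[>] 0) (𝓝 (Real.sign u / 2)) := by
  rcases lt_trichotomy u 0 with hneg | rfl | hpos
  · simpa [Real.sign_of_neg hneg, neg_div] using
      (tendsto_halfErf_div_sqrt_of_pos (neg_pos.2 hneg)).neg
  · simp
  · simpa only [Real.sign_of_pos hpos] using tendsto_halfErf_div_sqrt_of_pos hpos

lemma measurable_heat (u : ℝ) : Measurable fun t => heat t u := by
  unfold heat
  fun_prop

lemma continuous_heat (t : ℝ) : Continuous (heat t) := by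
  unfold heat
  fun_prop

lemma continuousOn_heat' (u : ℝ) : ContinuousOn (fun t => heat' t u) (Set.Ioi 0) := by
  unfold heat' heat
  fun_prop (disch := intro t (ht : 0 < t); positivity)

lemma norm_heat_le {t : ℝ} (ht : 0 ≤ t) (u : ℝ) : ‖heat t u‖ ≤ (√(4 * Real.pi * t))⁻¹ := by
  rw [heat, Real.norm_of_nonneg (by positivity)]
  refine mul_le_of_le_one_right (by positivity) (Real.exp_le_one_iff.2 ?_)
  exact div_nonpos_of_nonpos_of_nonneg (neg_nonpos.2 (sq_nonneg u)) (by positivity)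

lemma pos_of_mem_uIoc {a b t : ℝ} (ha : 0 ≤ a) (hb : 0 ≤ b) (ht : t ∈ Set.uIoc a b) : 0 < t :=
  (le_min ha hb).trans_lt ht.1

lemma intervalIntegrable_inv_sqrt_mul {a b c : ℝ} (ha : 0 ≤ a) (hb : 0 ≤ b) (hc : 0 ≤ c) :
    IntervalIntegrable (fun t => (√(c * t))⁻¹) volume a b := by
  have hrpow : IntervalIntegrable (fun t : ℝ => (√c)⁻¹ * t ^ (-(1 / 2) : ℝ)) volume a b :=
    (intervalIntegral.intervalIntegrable_rpow' (by norm_num)).const_mul _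
  refine hrpow.congr fun t ht => ?_
  have htpos : 0 < t := pos_of_mem_uIoc ha hb ht
  simp only [Real.sqrt_mul hc, mul_inv, Real.rpow_neg htpos.le, ← Real.sqrt_eq_rpow]

lemma intervalIntegrable_heat (u : ℝ) {a b : ℝ} (ha : 0 ≤ a) (hb : 0 ≤ b) :
    IntervalIntegrable (fun t => heat t u) volume a b := by
  refine (intervalIntegrable_inv_sqrt_mul ha hb (c := 4 * Real.pi) (by positivity)).mono_fun'
    (measurable_heat u).aestronglyMeasurable ?_
  filter_upwards [ae_restrict_mem measurableSet_uIoc] with t ht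
  exact norm_heat_le (pos_of_mem_uIoc ha hb ht).le u

lemma intervalIntegrable_heat' (u : ℝ) {a b : ℝ} (ha : 0 < a) (hb : 0 < b) :
    IntervalIntegrable (fun t => heat' t u) volume a b :=
  ((continuousOn_heat' u).mono fun _ ht => (lt_min ha hb).trans_le ht.1).intervalIntegrable

lemma integral_heat'_s10 (u : ℝ) {a b : ℝ} (ha : 0 < a) (hb : 0 < b) :
    ∫ t in a..b, heat' t u = halfErf (u / (2 * √b)) - halfErf (u / (2 * √a)) :=
  intervalIntegral.integral_eq_sub_of_hasDerivAt
    (fun _ ht => hasDerivAt_halfErf_div_sqrt u ((lt_min ha hb).trans_le ht.1))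
    (intervalIntegrable_heat' u ha hb)

lemma continuous_integral_heat {Λ : ℝ} (hΛ : 0 ≤ Λ) :
    Continuous fun u => ∫ t in (0 : ℝ)..Λ, heat t u := by
  refine intervalIntegral.continuous_of_dominated_interval
    (bound := fun t => (√(4 * Real.pi * t))⁻¹)
    (fun u => (measurable_heat u).aestronglyMeasurable) (fun u => .of_forall fun t ht => ?_)
    (intervalIntegrable_inv_sqrt_mul le_rfl hΛ (by positivity))
    (.of_forall fun t _ => continuous_heat t)
  exact norm_heat_le (pos_of_mem_uIoc le_rfl hΛ ht).le u

lemma tendsto_intervalIntegral_nhdsGT_left {E : Type*} [NormedAddCommGroup E] [NormedSpace ℝ E]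
    {μ : Measure ℝ} [NullSingletonClass μ] {f : ℝ → E} {a b : ℝ} (hab : a < b)
    (hf : IntervalIntegrable f μ a b) :
    Tendsto (fun ε => ∫ t in ε..b, f t ∂μ) (𝓝[>] a) (𝓝 (∫ t in a..b, f t ∂μ)) := by
  have hcont := intervalIntegral.continuousOn_primitive_interval_left
    ((intervalIntegrable_iff' (μ := μ)).1 hf) a Set.left_mem_uIcc
  rw [Set.uIcc_of_le hab.le, ContinuousWithinAt, nhdsWithin_Icc_eq_nhdsGE hab] at hcont
  exact hcont.mono_left (nhdsWithin_mono a Set.Ioi_subset_Ici_self)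

lemma intervalIntegrable_phiHeat' (φ : ℝ → ℝ) (u : ℝ) {a b : ℝ} (ha : 0 < a) (hb : 0 < b) :
    IntervalIntegrable (fun t => phiHeat' φ t u) volume a b :=
  ((intervalIntegrable_heat u ha.le hb.le).const_mul _).add
    ((intervalIntegrable_heat' u ha hb).const_mul _)

lemma integral_phiHeat' (φ : ℝ → ℝ) (u : ℝ) {a b : ℝ} (ha : 0 < a) (hb : 0 < b) :
    ∫ t in a..b, phiHeat' φ t u = deriv φ u * (∫ t in a..b, heat t u) +
      φ u * (halfErf (u / (2 * √b)) - halfErf (u / (2 * √a))) := by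
  unfold phiHeat'
  rw [intervalIntegral.integral_add ((intervalIntegrable_heat u ha.le hb.le).const_mul _)
      ((intervalIntegrable_heat' u ha hb).const_mul _),
    intervalIntegral.integral_const_mul, intervalIntegral.integral_const_mul,
    integral_heat'_s10 u ha hb]

/-- The limit of `∫_ε^Λ (φh_t)′(u) dt` as `ε → 0⁺`, with the sign of `u` replaced by an independent
parameter `s`. For fixed `s` it is continuous in `u`, so the choices `s = ±1` extend the two
branches of the limit across `u = 0`. -/
noncomputable def phiHeatBranch (φ : ℝ → ℝ) (Λ s u : ℝ) : ℝ :=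
  deriv φ u * (∫ t in (0 : ℝ)..Λ, heat t u) + φ u * (halfErf (u / (2 * √Λ)) - s / 2)

lemma tendsto_integral_phiHeat' (φ : ℝ → ℝ) {Λ : ℝ} (hΛ : 0 < Λ) (u : ℝ) :
    Tendsto (fun ε => ∫ t in ε..Λ, phiHeat' φ t u) (𝓝[>] 0)
      (𝓝 (phiHeatBranch φ Λ (Real.sign u) u)) := by
  have hheat := tendsto_intervalIntegral_nhdsGT_left hΛ (intervalIntegrable_heat u le_rfl hΛ.le)
  have hheat' := (tendsto_halfErf_div_sqrt u).const_sub (halfErf (u / (2 * √Λ)))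
  refine ((hheat.const_mul (deriv φ u)).add (hheat'.const_mul (φ u))).congr' ?_
  filter_upwards [self_mem_nhdsWithin] with ε hε
  exact (integral_phiHeat' φ u hε hΛ).symm

lemma rhoBar_eq_phiHeatBranch (φ : ℝ → ℝ) {Λ : ℝ} (hΛ : 0 < Λ) (x y : ℝ) :
    rhoBar φ Λ x y = -(1 / 2) * (phiHeatBranch φ Λ (Real.sign (x - y)) (x - y) +
      phiHeatBranch φ Λ (Real.sign (x + y)) (x + y)) := by
  refine Tendsto.limUnder_eq ((((tendsto_integral_phiHeat' φ hΛ (x - y)).add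
    (tendsto_integral_phiHeat' φ hΛ (x + y))).const_mul (-(1 / 2))).congr' ?_)
  filter_upwards [self_mem_nhdsWithin] with ε hε
  rw [rho, intervalIntegral.integral_add (intervalIntegrable_phiHeat' φ _ hε hΛ)
    (intervalIntegrable_phiHeat' φ _ hε hΛ)]

lemma continuous_phiHeatBranch {φ : ℝ → ℝ} (hφ : ContDiff ℝ 1 φ) {Λ : ℝ} (hΛ : 0 ≤ Λ) (s : ℝ) :
    Continuous (phiHeatBranch φ Λ s) := by
  have hderiv : Continuous (deriv φ) := hφ.continuous_deriv le_rfl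
  have herf : Continuous fun u => halfErf (u / (2 * √Λ)) :=
    continuous_halfErf.comp (by fun_prop)
  exact (hderiv.mul (continuous_integral_heat hΛ)).add
    (hφ.continuous.mul (herf.sub continuous_const))

lemma tendsto_rhoBar_of_sign_eq {φ : ℝ → ℝ} (hφ : ContDiff ℝ 1 φ) {Λ : ℝ} (hΛ : 0 < Λ)
    {S : Set (ℝ × ℝ)} {s s' : ℝ} (hsub : ∀ p ∈ S, Real.sign (p.1 - p.2) = s)
    (hadd : ∀ p ∈ S, Real.sign (p.1 + p.2) = s') (q : ℝ × ℝ) :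
    Tendsto (fun p : ℝ × ℝ => rhoBar φ Λ p.1 p.2) (𝓝[S] q)
      (𝓝 (-(1 / 2) * (phiHeatBranch φ Λ s (q.1 - q.2) + phiHeatBranch φ Λ s' (q.1 + q.2)))) := by
  have hcont : Continuous fun p : ℝ × ℝ =>
      -(1 / 2) * (phiHeatBranch φ Λ s (p.1 - p.2) + phiHeatBranch φ Λ s' (p.1 + p.2)) :=
    continuous_const.mul
      (((continuous_phiHeatBranch hφ hΛ.le s).comp (continuous_fst.sub continuous_snd)).add
        ((continuous_phiHeatBranch hφ hΛ.le s').comp (continuous_fst.add continuous_snd)))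
  refine ((hcont.tendsto q).mono_left nhdsWithin_le_nhds).congr' ?_
  filter_upwards [self_mem_nhdsWithin] with p hp
  rw [rhoBar_eq_phiHeatBranch φ hΛ, hsub p hp, hadd p hp]

theorem stmt10_general {φ : ℝ → ℝ} (hφ : ContDiff ℝ 1 φ) {Λ : ℝ} (hΛ : 0 < Λ) (x₀ s : ℝ) :
    ∃ A₁ A₂ : ℝ,
      Tendsto (fun p : ℝ × ℝ => rhoBar φ Λ p.1 p.2)
        (𝓝[{p : ℝ × ℝ | p.1 < p.2 ∧ Real.sign (p.1 + p.2) = s}] (x₀, x₀)) (𝓝 A₁) ∧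
      Tendsto (fun p : ℝ × ℝ => rhoBar φ Λ p.1 p.2)
        (𝓝[{p : ℝ × ℝ | p.2 < p.1 ∧ Real.sign (p.1 + p.2) = s}] (x₀, x₀)) (𝓝 A₂) ∧
      A₁ - A₂ = -(φ 0 / 2) := by
  refine ⟨_, _,
    tendsto_rhoBar_of_sign_eq hφ hΛ (fun p hp => Real.sign_of_neg (sub_neg.2 hp.1))
      (fun p hp => hp.2) _,
    tendsto_rhoBar_of_sign_eq hφ hΛ (fun p hp => Real.sign_of_pos (sub_pos.2 hp.1))
      (fun p hp => hp.2) _, ?_⟩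
  simp only [phiHeatBranch, sub_self]
  ring

/-- For every `Λ > 0` and `x₀ ≥ 0`, both one-sided limits `A₁, A₂` of `ρ̄_Λ` at
`(x₀, x₀)` from the two sectors exist, and `A₁ − A₂ = −1/2` independently of `x₀`,
`Λ` and the cutoff `φ`. -/
theorem stmt10 (φ : ℝ → ℝ) (hφ : ContDiff ℝ (⊤ : ℕ∞) φ) (hsupp : HasCompactSupport φ)
    (heven : ∀ x, φ (-x) = φ x) (δ : ℝ) (hδ : 0 < δ) (hone : ∀ x, |x| < δ → φ x = 1)
    (Λ : ℝ) (hΛ : 0 < Λ) (x₀ : ℝ) (hx₀ : 0 ≤ x₀) :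
    ∃ A₁ A₂ : ℝ,
      Tendsto (fun p : ℝ × ℝ => rhoBar φ Λ p.1 p.2)
        (𝓝[{p : ℝ × ℝ | 0 ≤ p.1 ∧ p.1 < p.2}] (x₀, x₀)) (𝓝 A₁) ∧
      Tendsto (fun p : ℝ × ℝ => rhoBar φ Λ p.1 p.2)
        (𝓝[{p : ℝ × ℝ | 0 ≤ p.2 ∧ p.2 < p.1}] (x₀, x₀)) (𝓝 A₂) ∧
      A₁ - A₂ = -(1 / 2) := by
  obtain ⟨A₁, A₂, h₁, h₂, hjump⟩ := stmt10_general (hφ.of_le (by simp)) hΛ x₀ 1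
  rw [hone 0 (by simpa using hδ)] at hjump
  refine ⟨A₁, A₂, h₁.mono_left (nhdsWithin_mono _ fun p hp => ⟨hp.2, ?_⟩),
    h₂.mono_left (nhdsWithin_mono _ fun p hp => ⟨hp.2, ?_⟩), hjump⟩ <;>
  exact Real.sign_of_pos (by linarith [hp.1, hp.2])
end
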